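/- arXiv:1704.07095 — 2 statements merged into one kernel-verified Lean document; each statement's English description precedes it below -/
import Mathlib

section
/- Let X and Y be real Banach spaces, Y nontrivial, such that Y has property β with parameter ρ ∈ [0,1) and X satisfies α(X) > α₀ for some α₀ ∈ (0,1]. Set ε₀ = min{ (2/(1 − α₀/3))·(1−ρ)/(1+ρ), (1/2)·((1+ρ)/(1−ρ))·(1 − α₀/3) }. Then for every ε with 0 < ε < ε₀, the spherical Bishop–Phelps–Bollobás modulus satisfies Φ^S(X,Y,ε) ≤ √(2ε(1 − α₀/3)) · √((1+ρ)/(1−ρ)). -/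
/-!
Write `A = 1 - α₀ / 3`, `c = (1 + ρ) / (1 - ρ)` and `D = √(2 * ε * A * c)`, the claimed bound; the
hypothesis on `ε` says that `2 * ε < D < 2`. Given `‖T x‖ > 1 - ε`, property β provides a functional
`y*` of the family with `y* (T x) > 1 - ε` (after replacing `x` by `-x` if needed). Let
`g = y* ∘ T` and `q = ‖g‖ ∈ (1 - ε, 1]`.

* The quantitative Bishop–Phelps lemma (`exists_phelps`), applied to `g / q` with cone parameter
  `k = ε' / D`, where `q * ε' = q - 1 + ε`, gives a unit vector `z` with `‖x - z‖ ≤ D` and a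
  functional `ζ` attaining its norm at `z` with `‖g / q - ζ‖ ≤ k`. It follows from an Ekeland-type
  maximality argument and a separation theorem.
* Normalizing `ζ` costs in general a factor `2`, but since uniform non-squareness passes to the dual
  with the same parameter (`dual_nonsquare`), `e = ζ / ‖ζ‖` satisfies `‖g / q - e‖ ≤ 2 * A * k`
  (`norm_sub_normalize_le`). Hence `‖e - g‖ ≤ (1 - q) + 2 * A * (q - 1 + ε) / D`, which is affine in
  `q` and so at most `max ε (2 * A * ε / D) = max ε (D / c)`.
* Property β lifts `e` to an operator (`exists_attaining_operator`): add to `T` a rank-one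
  operator in the direction `y` dual to `y*`, so that the coordinate `y*` becomes `(1 + w) * e`, and
  divide by `1 + w`. If `‖e - g‖ ≤ G` and `w = ρ * G / (1 - ρ)`, the result `F` has norm one, attains
  it at `z`, and `‖T - F‖ ≤ max G (2 * w / (1 + w))`, which is at most `D` for both values of `G`.
-/


noncomputable section

/-- Property β of Lindenstrauss with parameter `ρ`. -/
def PropertyBeta (Y : Type u) [NormedAddCommGroup Y] [NormedSpace ℝ Y] (ρ : ℝ) : Prop :=
  ∃ (Λ : Type u) (yv : Λ → Y) (yf : Λ → (Y →L[ℝ] ℝ)),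
    (∀ α, ‖yv α‖ = 1) ∧ (∀ α, ‖yf α‖ = 1) ∧ (∀ α, yf α (yv α) = 1) ∧
    (∀ α γ, α ≠ γ → |yf α (yv γ)| ≤ ρ) ∧
    (∀ v : Y, IsLUB (Set.range fun α => |yf α v|) ‖v‖)

/-- The parameter of uniform non-squareness
`α(X) = 2 - sup { (‖x+y‖ + ‖x-y‖)/2 : x, y ∈ B_X }`. -/
def unifNonSqParam (X : Type*) [NormedAddCommGroup X] [NormedSpace ℝ X] : ℝ :=
  2 - sSup {t : ℝ | ∃ x y : X, ‖x‖ ≤ 1 ∧ ‖y‖ ≤ 1 ∧ t = (‖x + y‖ + ‖x - y‖) / 2}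

/-- The spherical Bishop–Phelps–Bollobás modulus `Φ^S(X,Y,ε)` of a pair of spaces. -/
def PhiS (X Y : Type*) [NormedAddCommGroup X] [NormedSpace ℝ X]
    [NormedAddCommGroup Y] [NormedSpace ℝ Y] (ε : ℝ) : ℝ :=
  sInf {δ : ℝ | 0 < δ ∧ ∀ (x : X) (T : X →L[ℝ] Y), ‖x‖ = 1 → ‖T‖ = 1 → 1 - ε < ‖T x‖ →
    ∃ (z : X) (F : X →L[ℝ] Y), ‖z‖ = 1 ∧ ‖F‖ = 1 ∧ ‖F z‖ = 1 ∧ ‖x - z‖ < δ ∧ ‖T - F‖ < δ}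


/-! ### A quantitative Bishop–Phelps lemma -/

/-- Ekeland-type maximal element for the order `k * ‖y - x‖ ≤ φ y - φ x` on a closed set. -/
lemma exists_ekeland_maximal {X : Type*} [NormedAddCommGroup X] [CompleteSpace X]
    (B : Set X) (hB : IsClosed B) (φ : X → ℝ) (hφ : Continuous φ) (M : ℝ)
    (hM : ∀ y ∈ B, φ y ≤ M) (x : X) (hx : x ∈ B) (k : ℝ) (hk : 0 < k) :
    ∃ z ∈ B, k * ‖z - x‖ ≤ φ z - φ x ∧ ∀ y ∈ B, φ y ≤ φ z + k * ‖y - z‖ := by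
  -- each point can be improved by at least half of the possible gain
  have step : ∀ u : B, ∃ v : B, k * ‖(v : X) - u‖ ≤ φ v - φ u ∧
      ∀ w ∈ B, k * ‖w - u‖ ≤ φ w - φ u → φ w - φ v ≤ φ v - φ u := by
    intro u
    set S : Set ℝ := φ '' {w | w ∈ B ∧ k * ‖w - u‖ ≤ φ w - φ u} with hS
    have hbdd : BddAbove S := ⟨M, by rintro _ ⟨w, hw, rfl⟩; exact hM w hw.1⟩
    have hmem : ∀ w ∈ B, k * ‖w - u‖ ≤ φ w - φ u → φ w ≤ sSup S :=
      fun w hw h => le_csSup hbdd ⟨w, ⟨hw, h⟩, rfl⟩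
    have hu : φ u ≤ sSup S := hmem u u.2 (by simp)
    rcases hu.eq_or_lt with h | h
    · exact ⟨u, by simp, fun w hw h' => by have := hmem w hw h'; linarith⟩
    · have hlt : (sSup S + φ u) / 2 < sSup S := by linarith
      obtain ⟨_, ⟨v, ⟨hv, hv'⟩, rfl⟩, h2⟩ :=
        exists_lt_of_lt_csSup (show S.Nonempty from ⟨φ u, u, ⟨u.2, by simp⟩, rfl⟩) hlt
      exact ⟨⟨v, hv⟩, hv', fun w hw h' => by have := hmem w hw h'; simp only; linarith⟩
  choose g hg1 hg2 using step
  let s : ℕ → B := fun n => g^[n] ⟨x, hx⟩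
  have hs : ∀ n, s (n + 1) = g (s n) := fun n => Function.iterate_succ_apply' g n _
  have htrans : ∀ a b c : X, k * ‖b - a‖ ≤ φ b - φ a → k * ‖c - b‖ ≤ φ c - φ b →
      k * ‖c - a‖ ≤ φ c - φ a := by
    intro a b c h1 h2
    have h3 : ‖c - a‖ ≤ ‖c - b‖ + ‖b - a‖ := norm_sub_le_norm_sub_add_norm_sub c b a
    nlinarith
  have hord : ∀ n m, n ≤ m → k * ‖(s m : X) - s n‖ ≤ φ (s m) - φ (s n) := by
    intro n m hnm
    induction m, hnm using Nat.le_induction with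
    | base => simp
    | succ m _ ih => exact htrans _ _ _ ih (by rw [hs]; exact hg1 _)
  have hmono : Monotone fun n => φ (s n) := fun n m h => by
    have := hord n m h
    have : 0 ≤ k * ‖(s m : X) - s n‖ := by positivity
    simp only; linarith
  have hbd : BddAbove (Set.range fun n => φ (s n)) :=
    ⟨M, by rintro _ ⟨n, rfl⟩; exact hM _ (s n).2⟩
  obtain ⟨L, hL⟩ : ∃ L, Filter.Tendsto (fun n => φ (s n)) Filter.atTop (nhds L) :=
    ⟨_, tendsto_atTop_ciSup hmono hbd⟩
  have hle : ∀ n, φ (s n) ≤ L := fun n => hmono.ge_of_tendsto hL n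
  have hc : CauchySeq fun n => (s n : X) := by
    refine cauchySeq_of_le_tendsto_0' (fun n => (L - φ (s n)) / k) ?_ ?_
    · intro n m hnm
      rw [le_div_iff₀ hk, dist_eq_norm, norm_sub_rev, mul_comm]
      linarith [hord n m hnm, hle m]
    · simpa using ((hL.const_sub L).div_const k)
  obtain ⟨z, hz⟩ := cauchySeq_tendsto_of_complete hc
  have hzB : z ∈ B := hB.mem_of_tendsto hz (Filter.Eventually.of_forall fun n => (s n).2)
  have hzL : φ z = L := tendsto_nhds_unique ((hφ.tendsto z).comp hz) hL
  have hzo : ∀ n, k * ‖z - s n‖ ≤ φ z - φ (s n) := by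
    intro n
    have h1 : Filter.Tendsto (fun m => k * ‖(s m : X) - s n‖) Filter.atTop
        (nhds (k * ‖z - s n‖)) := ((hz.sub_const _).norm).const_mul k
    have h2 : Filter.Tendsto (fun m => φ (s m) - φ (s n)) Filter.atTop
        (nhds (φ z - φ (s n))) := by rw [hzL]; exact hL.sub_const _
    exact le_of_tendsto_of_tendsto h1 h2
      (Filter.eventually_atTop.2 ⟨n, fun m hm => hord n m hm⟩)
  refine ⟨z, hzB, hzo 0, fun y hy => ?_⟩
  by_contra! hcon
  have hyL : φ y ≤ L := by
    have h1 : ∀ n, φ y ≤ φ (s (n + 1)) + (φ (s (n + 1)) - φ (s n)) := by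
      intro n
      have := hg2 (s n) y hy (htrans _ _ _ (hzo n) (by linarith))
      rw [hs]; linarith
    have h2 := (Filter.tendsto_add_atTop_iff_nat 1).2 hL
    have h3 := h2.add (h2.sub hL)
    rw [sub_self, add_zero] at h3
    exact ge_of_tendsto' h3 h1
  have : 0 ≤ k * ‖y - z‖ := by positivity
  linarith

/-- If `f` is controlled on the convex set `B` by a cone at `z`, then some functional at distance
at most `k` from `f` attains its supremum over `B` at `z`: separate the open epigraph of
`k * ‖·‖` from the part of the hypograph of `f` lying over `B - z`. -/
lemma exists_support_functional {X : Type*} [NormedAddCommGroup X] [NormedSpace ℝ X]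
    (B : Set X) (hB : Convex ℝ B) (f : X →L[ℝ] ℝ) (z : X) (hz : z ∈ B) (k : ℝ) (hk : 0 < k)
    (h : ∀ y ∈ B, f y ≤ f z + k * ‖y - z‖) :
    ∃ ζ : X →L[ℝ] ℝ, ‖f - ζ‖ ≤ k ∧ ∀ y ∈ B, ζ y ≤ ζ z := by
  set S : Set (X × ℝ) := {p | k * ‖p.1‖ < p.2}
  set T : Set (X × ℝ) := {p | p.1 + z ∈ B ∧ p.2 ≤ f p.1}
  have hS : Convex ℝ S := by
    intro p hp q hq a b ha hb hab
    simp only [S, Set.mem_ofPred_eq, Prod.fst_add, Prod.snd_add, Prod.smul_fst, Prod.smul_snd,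
      smul_eq_mul] at *
    have h1 : ‖a • p.1 + b • q.1‖ ≤ a * ‖p.1‖ + b * ‖q.1‖ := by
      refine (norm_add_le _ _).trans (le_of_eq ?_)
      rw [norm_smul, norm_smul, Real.norm_of_nonneg ha, Real.norm_of_nonneg hb]
    have h2 := mul_le_mul_of_nonneg_left h1 hk.le
    rcases ha.eq_or_lt with rfl | ha'
    · have : b = 1 := by linarith
      subst this; nlinarith
    · nlinarith [mul_lt_mul_of_pos_left hp ha', mul_le_mul_of_nonneg_left hq.le hb]
  have hSo : IsOpen S := isOpen_lt (by fun_prop) (by fun_prop)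
  have hT : Convex ℝ T := by
    intro p hp q hq a b ha hb hab
    simp only [T, Set.mem_ofPred_eq, Prod.fst_add, Prod.snd_add, Prod.smul_fst, Prod.smul_snd,
      smul_eq_mul, map_add, map_smul] at *
    refine ⟨?_, by nlinarith [mul_le_mul_of_nonneg_left hp.2 ha,
      mul_le_mul_of_nonneg_left hq.2 hb]⟩
    have := hB hp.1 hq.1 ha hb hab
    convert this using 1
    calc a • p.1 + b • q.1 + z = a • p.1 + b • q.1 + (a + b) • z := by rw [hab, one_smul]
      _ = _ := by module
  have hd : Disjoint S T := by
    rw [Set.disjoint_left]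
    intro p hp hq
    have := h _ hq.1
    simp only [S, T, Set.mem_ofPred_eq, map_add, add_sub_cancel_right] at *
    linarith [hq.2]
  obtain ⟨Φ, u, hΦ1, hΦ2⟩ := geometric_hahn_banach_open hS hSo hT hd
  have hsplit : ∀ v t, Φ (v, t) = Φ (v, 0) + t * Φ (0, 1) := by
    intro v t
    have : ((v, t) : X × ℝ) = (v, 0) + t • (0, 1) := by simp
    rw [this, map_add, map_smul, smul_eq_mul]
  have hu : u ≤ 0 := by
    have := hΦ2 (0, 0) (by simp [T, hz])
    simpa [show ((0 : X), (0 : ℝ)) = 0 from rfl] using this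
  have hs : Φ (0, 1) < 0 := by
    have := hΦ1 (0, 1) (by simp [S])
    linarith
  set s : ℝ := -Φ (0, 1) with hs_def
  have hs0 : 0 < s := by linarith
  have hu0 : 0 ≤ u := by
    by_contra! hneg
    have := hΦ1 (0, -u / s) (by simp only [S, Set.mem_ofPred_eq, norm_zero, mul_zero]; exact div_pos (by linarith) hs0)
    rw [hsplit, show ((0 : X), (0 : ℝ)) = 0 from rfl, map_zero,
      show Φ (0, 1) = -s by simp [hs_def]] at this
    have h3 : -u / s * -s = u := by field_simp
    linarith
  have hu' : u = 0 := le_antisymm hu hu0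
  subst hu'
  let g : X →L[ℝ] ℝ := s⁻¹ • Φ.comp (ContinuousLinearMap.inl ℝ X ℝ)
  have hg : ∀ v, s * g v = Φ (v, 0) := fun v => by
    simp [g]; field_simp
  have hg1 : ∀ v, g v ≤ k * ‖v‖ := by
    intro v
    refine le_of_forall_pos_le_add fun e he => ?_
    have := hΦ1 (v, k * ‖v‖ + e) (by simp only [S, Set.mem_ofPred_eq]; linarith)
    rw [hsplit, ← hg, show Φ (0, 1) = -s by simp [hs_def]] at this
    have h4 : s * (g v - (k * ‖v‖ + e)) < 0 := by linarith
    have := neg_of_mul_neg_right h4 hs0.le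
    linarith
  refine ⟨f - g, ?_, fun y hy => ?_⟩
  · rw [sub_sub_cancel]
    refine ContinuousLinearMap.opNorm_le_bound _ hk.le fun v => ?_
    rw [Real.norm_eq_abs, abs_le]
    have := hg1 (-v)
    rw [map_neg, norm_neg] at this
    exact ⟨by linarith, hg1 v⟩
  · have := hΦ2 (y - z, f (y - z)) (by simp [T, hy])
    rw [hsplit, ← hg, show Φ (0, 1) = -s by simp [hs_def]] at this
    have h4 : 0 ≤ s * (g (y - z) - f (y - z)) := by linarith
    have := nonneg_of_mul_nonneg_right h4 hs0
    simp only [map_sub, sub_apply] at this ⊢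
    linarith

lemma norm_le_of_ball_bound {X : Type*} [NormedAddCommGroup X] [NormedSpace ℝ X]
    (f : X →L[ℝ] ℝ) (C : ℝ) (h : ∀ x, ‖x‖ ≤ 1 → f x ≤ C) : ‖f‖ ≤ C := by
  have hC : 0 ≤ C := by simpa using h 0 (by simp)
  refine ContinuousLinearMap.opNorm_le_of_unit_norm hC fun x hx => ?_
  rw [Real.norm_eq_abs, abs_le]
  have := h (-x) (by simp [hx])
  rw [map_neg] at this
  exact ⟨by linarith, h x hx.le⟩

/-- Quantitative Bishop–Phelps lemma: the point and the functional are perturbed by at most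
`ε / k` and `k`. -/
lemma exists_phelps {X : Type*} [NormedAddCommGroup X] [NormedSpace ℝ X] [CompleteSpace X]
    (f : X →L[ℝ] ℝ) (hf : ‖f‖ = 1) (x : X) (hx : ‖x‖ = 1) (ε k : ℝ) (hk : 0 < k) (hk1 : k < 1)
    (hfx : 1 - ε ≤ f x) :
    ∃ (z : X) (ζ : X →L[ℝ] ℝ), ‖z‖ = 1 ∧ ζ ≠ 0 ∧ ζ z = ‖ζ‖ ∧ ‖x - z‖ ≤ ε / k ∧ ‖f - ζ‖ ≤ k := by
  have hball : ∀ y ∈ Metric.closedBall (0 : X) 1, f y ≤ 1 := by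
    intro y hy
    rw [mem_closedBall_zero_iff] at hy
    have := f.le_opNorm y
    rw [hf, one_mul, Real.norm_eq_abs] at this
    exact (le_abs_self _).trans (this.trans hy)
  obtain ⟨z, hz, hzx, hzmax⟩ := exists_ekeland_maximal (Metric.closedBall (0 : X) 1)
    Metric.isClosed_closedBall f f.continuous 1 hball x (by simp [hx]) k hk
  obtain ⟨ζ, hζ, hsup⟩ := exists_support_functional (Metric.closedBall (0 : X) 1)
    (convex_closedBall 0 1) f z hz k hk hzmax
  have hζ0 : ζ ≠ 0 := by
    rintro rfl
    rw [sub_zero, hf] at hζ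
    linarith
  have hζz : ‖ζ‖ ≤ ζ z := norm_le_of_ball_bound ζ _ fun y hy => hsup y (by simpa using hy)
  have hpos : 0 < ‖ζ‖ := norm_pos_iff.2 hζ0
  have hz1 : ‖z‖ ≤ 1 := by simpa using hz
  have hle : ζ z ≤ ‖ζ‖ * ‖z‖ := (le_abs_self _).trans (ζ.le_opNorm z)
  refine ⟨z, ζ, ?_, hζ0, ?_, ?_, hζ⟩
  · nlinarith
  · nlinarith
  · rw [le_div_iff₀ hk, norm_sub_rev, mul_comm]
    linarith [hball z hz]

/-! ### Uniform non-squareness and normalization -/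

/-- Uniform non-squareness passes to the dual. -/
lemma dual_nonsquare {X : Type*} [NormedAddCommGroup X] [NormedSpace ℝ X] (α : ℝ)
    (hX : α < unifNonSqParam X) (g h : X →L[ℝ] ℝ) (hg : ‖g‖ ≤ 1) (hh : ‖h‖ ≤ 1) :
    ‖g + h‖ + ‖g - h‖ ≤ 4 - 2 * α := by
  have hb : ∀ x y : X, ‖x‖ ≤ 1 → ‖y‖ ≤ 1 → ‖x + y‖ + ‖x - y‖ ≤ 4 - 2 * α := by
    intro x y hx hy
    have hbdd : BddAbove {t : ℝ | ∃ x y : X, ‖x‖ ≤ 1 ∧ ‖y‖ ≤ 1 ∧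
        t = (‖x + y‖ + ‖x - y‖) / 2} := by
      refine ⟨2, ?_⟩
      rintro _ ⟨a, b, ha, hb, rfl⟩
      linarith [norm_add_le a b, norm_sub_le a b]
    have := le_csSup hbdd ⟨x, y, hx, hy, rfl⟩
    unfold unifNonSqParam at hX
    linarith
  have h1 : ∀ y : X, ‖y‖ ≤ 1 → ‖g + h‖ ≤ 4 - 2 * α - (g - h) y := by
    intro y hy
    refine norm_le_of_ball_bound _ _ fun x hx => ?_
    have h2 : g (x + y) ≤ ‖x + y‖ :=
      (le_abs_self _).trans ((g.le_opNorm _).trans (mul_le_of_le_one_left (norm_nonneg _) hg))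
    have h3 : h (x - y) ≤ ‖x - y‖ :=
      (le_abs_self _).trans ((h.le_opNorm _).trans (mul_le_of_le_one_left (norm_nonneg _) hh))
    have h4 := hb x y hx hy
    simp only [map_add, map_sub, add_apply,
      sub_apply] at *
    linarith
  have h5 : ‖g - h‖ ≤ 4 - 2 * α - ‖g + h‖ :=
    norm_le_of_ball_bound _ _ fun y hy => by linarith [h1 y hy]
  linarith

/-- Normalizing a vector `ζ` within `k` of the unit vector `f` gives in general only
`‖f - ζ / ‖ζ‖‖ ≤ 2 * k`; the non-squareness bound `hE` improves this by the factor `1 - α / 3`.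
If `|1 - ‖ζ‖| = t` is close to `k`, then one of the two diagonals spanned by `(f - ζ) / k` and a
unit vector is long, so the other one, which controls `f - ζ / ‖ζ‖`, is short. -/
lemma norm_sub_normalize_le {E : Type*} [NormedAddCommGroup E] [NormedSpace ℝ E] (α : ℝ)
    (hα : 0 ≤ α) (hα1 : α ≤ 1)
    (hE : ∀ g h : E, ‖g‖ ≤ 1 → ‖h‖ ≤ 1 → ‖g + h‖ + ‖g - h‖ ≤ 4 - 2 * α)
    (f ζ : E) (hf : ‖f‖ = 1) (hζ : ζ ≠ 0) (k : ℝ) (hk : 0 < k) (hk2 : k ≤ 1 / 2)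
    (hfζ : ‖f - ζ‖ ≤ k) : ‖f - ‖ζ‖⁻¹ • ζ‖ ≤ 2 * (1 - α / 3) * k := by
  have hpos : 0 < ‖ζ‖ := norm_pos_iff.2 hζ
  set e : E := ‖ζ‖⁻¹ • ζ with he
  have he1 : ‖e‖ = 1 := by rw [he, norm_smul, norm_inv, norm_norm, inv_mul_cancel₀ hpos.ne']
  have hζe : ζ = ‖ζ‖ • e := by rw [he, smul_smul, mul_inv_cancel₀ hpos.ne', one_smul]
  set u : E := k⁻¹ • (f - ζ) with hu
  have hu1 : ‖u‖ ≤ 1 := by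
    rw [hu, norm_smul, norm_inv, Real.norm_of_nonneg hk.le, inv_mul_le_iff₀ hk]; linarith
  have hku : f - ζ = k • u := by rw [hu, smul_smul, mul_inv_cancel₀ hk.ne', one_smul]
  clear_value e u
  have htri : |1 - ‖ζ‖| ≤ k := by
    rw [← hf]; exact (abs_norm_sub_norm_le f ζ).trans hfζ
  rw [abs_le] at htri
  -- `t / k` is the relative deviation of `‖ζ‖` from `1`
  have key : ∀ t N : ℝ, 0 ≤ t → t ≤ k → N ≤ 3 - 2 * α - t / k → ‖f - e‖ ≤ k + t →
      ‖f - e‖ ≤ (k - t) + t * N → ‖f - e‖ ≤ 2 * (1 - α / 3) * k := by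
    intro t N ht htk hN h1 h2
    obtain ⟨τ, rfl⟩ : ∃ τ, t = τ * k := ⟨t / k, by field_simp⟩
    rw [mul_div_cancel_right₀ _ hk.ne'] at hN
    have hτ : 0 ≤ τ := nonneg_of_mul_nonneg_left ht hk
    rcases le_total τ (1 / 3) with h | h
    · nlinarith
    · have h3 : τ * N ≤ τ * (3 - 2 * α - τ) := mul_le_mul_of_nonneg_left hN hτ
      have h4 : (1 - τ) + τ * N ≤ 2 * (1 - α / 3) := by nlinarith [sq_nonneg (1 - τ)]
      nlinarith
  rcases le_total ‖ζ‖ 1 with hle | hle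
  · set t := 1 - ‖ζ‖ with ht
    have hfe : f - e = k • u - t • e := by
      rw [← hku, ht]; nth_rewrite 1 [hζe]; module
    have hA : 1 + t / k ≤ ‖u + e‖ := by
      have h1 : f = (1 - t - k) • e + k • (u + e) := by
        have : f = f - e + e := by abel
        rw [this, hfe]; module
      have h2 : ‖f‖ ≤ (1 - t - k) + k * ‖u + e‖ := by
        nth_rewrite 1 [h1]
        refine (norm_add_le _ _).trans (le_of_eq ?_)
        rw [norm_smul, norm_smul, he1, Real.norm_of_nonneg hk.le,
          Real.norm_of_nonneg (by linarith), mul_one]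
      rw [hf] at h2
      have h3 : (1 + t / k) * k ≤ ‖u + e‖ * k := by
        rw [add_mul, div_mul_cancel₀ _ hk.ne']; linarith
      exact le_of_mul_le_mul_right h3 hk
    have hB := hE u e hu1 he1.le
    refine key t ‖u - e‖ (by linarith) (by linarith) (by linarith) ?_ ?_
    · rw [hfe]
      refine (norm_sub_le _ _).trans ?_
      rw [norm_smul, norm_smul, he1, Real.norm_of_nonneg hk.le,
        Real.norm_of_nonneg (by linarith)]
      nlinarith
    · rw [hfe, show k • u - t • e = (k - t) • u + t • (u - e) by module]
      refine (norm_add_le _ _).trans ?_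
      rw [norm_smul, norm_smul, Real.norm_of_nonneg (by linarith : (0 : ℝ) ≤ k - t),
        Real.norm_of_nonneg (by linarith : (0 : ℝ) ≤ t)]
      nlinarith
  · set t := ‖ζ‖ - 1 with ht
    have hfe : f - e = k • u + t • e := by
      rw [← hku, ht]; nth_rewrite 1 [hζe]; module
    have hA : 1 + t / k ≤ ‖f - u‖ := by
      have h1 : (1 + t) • e = (1 - k) • f + k • (f - u) := by
        have : k • u = f - e - t • e := by rw [hfe]; abel
        rw [smul_sub, this]; module
      have h2 : 1 + t ≤ (1 - k) + k * ‖f - u‖ := by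
        have h3 : ‖(1 + t) • e‖ = 1 + t := by
          rw [norm_smul, he1, Real.norm_of_nonneg (by linarith), mul_one]
        rw [← h3, h1]
        refine (norm_add_le _ _).trans (le_of_eq ?_)
        rw [norm_smul, norm_smul, hf, Real.norm_of_nonneg hk.le,
          Real.norm_of_nonneg (by linarith), mul_one]
      have h3 : (1 + t / k) * k ≤ ‖f - u‖ * k := by
        rw [add_mul, div_mul_cancel₀ _ hk.ne']; linarith
      exact le_of_mul_le_mul_right h3 hk
    have hB := hE f u hf.le hu1
    refine key t ‖f + u‖ (by linarith) (by linarith) (by linarith) ?_ ?_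
    · rw [hfe]
      refine (norm_add_le _ _).trans ?_
      rw [norm_smul, norm_smul, he1, Real.norm_of_nonneg hk.le,
        Real.norm_of_nonneg (by linarith)]
      nlinarith
    · -- eliminate `e` in favour of `f`, dividing by `1 + t ≥ 1`
      have h1 : (1 + t) • (f - e) = (k - t) • u + t • (f + u) := by
        have : k • u = f - e - t • e := by rw [hfe]; abel
        rw [sub_smul, this]; module
      have h2 : (1 + t) * ‖f - e‖ ≤ (k - t) + t * ‖f + u‖ := by
        have h3 : ‖(1 + t) • (f - e)‖ = (1 + t) * ‖f - e‖ := by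
          rw [norm_smul, Real.norm_of_nonneg (by linarith)]
        rw [← h3, h1]
        refine (norm_add_le _ _).trans ?_
        rw [norm_smul, norm_smul, Real.norm_of_nonneg (by linarith : (0 : ℝ) ≤ k - t),
          Real.norm_of_nonneg (by linarith : (0 : ℝ) ≤ t)]
        nlinarith
      nlinarith [norm_nonneg (f - e)]

/-! ### Operators into a space with property β -/

/-- The rank-one correction of `T` in direction `yv a`, normalized. On the coordinate `a` it is `e`;
on every other coordinate property β makes the correction contribute only the factor `ρ`, and
`1 + w` with `w = ρ * G / (1 - ρ)` is the least scaling of `e` that dominates these coordinates. -/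
lemma exists_attaining_operator {X Y Λ : Type*} [NormedAddCommGroup X] [NormedSpace ℝ X]
    [NormedAddCommGroup Y] [NormedSpace ℝ Y] (ρ : ℝ) (hρ0 : 0 ≤ ρ) (hρ1 : ρ < 1)
    (yv : Λ → Y) (yf : Λ → (Y →L[ℝ] ℝ)) (hfv : ∀ α, yf α (yv α) = 1)
    (hρ : ∀ α γ, α ≠ γ → |yf α (yv γ)| ≤ ρ)
    (hlub : ∀ v : Y, IsLUB (Set.range fun α => |yf α v|) ‖v‖)
    (T : X →L[ℝ] Y) (hT : ‖T‖ = 1) (a : Λ) (e : X →L[ℝ] ℝ) (he : ‖e‖ = 1) (z : X)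
    (hz : ‖z‖ = 1) (hez : e z = 1) (G D : ℝ) (hG : ‖e - (yf a).comp T‖ ≤ G) (hGD : G ≤ D)
    (hD : 2 * (ρ * G / (1 - ρ)) ≤ D * (1 + ρ * G / (1 - ρ))) :
    ∃ F : X →L[ℝ] Y, ‖F‖ = 1 ∧ ‖F z‖ = 1 ∧ ‖T - F‖ ≤ D := by
  have hG0 : 0 ≤ G := (norm_nonneg _).trans hG
  have hρ1' : 0 < 1 - ρ := by linarith
  set w : ℝ := ρ * G / (1 - ρ) with hw
  have hw0 : 0 ≤ w := by positivity
  have hwG : ρ * (w + G) = w := by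
    have : w * (1 - ρ) = ρ * G := by rw [hw]; field_simp
    linarith
  clear_value w
  have hnorm : ∀ (v : Y) (C : ℝ), (∀ γ, |yf γ v| ≤ C) → ‖v‖ ≤ C := by
    intro v C h
    refine (hlub v).2 ?_
    rintro _ ⟨γ, rfl⟩
    exact h γ
  have hle : ∀ (v : Y) γ, |yf γ v| ≤ ‖v‖ := fun v γ => (hlub v).1 ⟨γ, rfl⟩
  have hTv : ∀ v γ, |yf γ (T v)| ≤ ‖v‖ := fun v γ =>
    (hle _ _).trans ((T.le_opNorm v).trans (by rw [hT, one_mul]))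
  have hev : ∀ v, |e v| ≤ ‖v‖ := fun v => (e.le_opNorm v).trans (by rw [he, one_mul])
  have hdv : ∀ v, |e v - yf a (T v)| ≤ G * ‖v‖ := fun v =>
    ((e - (yf a).comp T).le_opNorm v).trans (mul_le_mul_of_nonneg_right hG (norm_nonneg _))
  have hcorr : ∀ v γ, γ ≠ a →
      |((1 + w) * e v - yf a (T v)) * yf γ (yv a)| ≤ w * ‖v‖ := by
    intro v γ hγ
    have h1 : |(1 + w) * e v - yf a (T v)| ≤ (w + G) * ‖v‖ := by
      have h2 : (1 + w) * e v - yf a (T v) = w * e v + (e v - yf a (T v)) := by ring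
      rw [h2]
      refine (abs_add_le _ _).trans ?_
      rw [abs_mul, abs_of_nonneg hw0]
      nlinarith [hdv v, mul_le_mul_of_nonneg_left (hev v) hw0]
    rw [abs_mul]
    calc _ ≤ ((w + G) * ‖v‖) * ρ :=
          mul_le_mul h1 (hρ γ a hγ) (abs_nonneg _) (by positivity)
      _ = (ρ * (w + G)) * ‖v‖ := by ring
      _ = _ := by rw [hwG]
  have hl : 0 < 1 + w := by linarith
  let F : X →L[ℝ] Y :=
    (1 + w)⁻¹ • (T + ((1 + w) • e - (yf a).comp T).smulRight (yv a))
  have hF : ∀ v γ, yf γ (F v) =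
      (1 + w)⁻¹ * (yf γ (T v) + ((1 + w) * e v - yf a (T v)) * yf γ (yv a)) := by
    intro v γ
    simp [F, mul_add]
  have hFa : ∀ v, yf a (F v) = e v := by
    intro v
    rw [hF, hfv]; field_simp; ring
  have hF1 : ‖F‖ ≤ 1 := by
    refine ContinuousLinearMap.opNorm_le_bound _ zero_le_one fun v => hnorm _ _ fun γ => ?_
    rw [one_mul]
    by_cases hγ : γ = a
    · rw [hγ, hFa]; exact hev v
    · rw [hF, abs_mul, abs_of_pos (inv_pos.2 hl), inv_mul_le_iff₀ hl]
      refine (abs_add_le _ _).trans ?_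
      linarith [hTv v γ, hcorr v γ hγ]
  have hFz : 1 ≤ ‖F z‖ := by
    have := hle (F z) a
    rwa [hFa, hez, abs_one] at this
  have hFz' : ‖F z‖ ≤ ‖F‖ := by simpa [hz] using F.le_opNorm z
  refine ⟨F, by linarith, by linarith, ?_⟩
  refine ContinuousLinearMap.opNorm_le_bound _ (hG0.trans hGD) fun v => hnorm _ _ fun γ => ?_
  rw [sub_apply, map_sub]
  by_cases hγ : γ = a
  · rw [hγ, hFa, abs_sub_comm]
    exact (hdv v).trans (mul_le_mul_of_nonneg_right hGD (norm_nonneg _))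
  · have h1 : yf γ (T v) - yf γ (F v) = (1 + w)⁻¹ *
        (w * yf γ (T v) - ((1 + w) * e v - yf a (T v)) * yf γ (yv a)) := by
      rw [hF]; field_simp; ring
    rw [h1, abs_mul, abs_of_pos (inv_pos.2 hl), inv_mul_le_iff₀ hl]
    refine (abs_sub _ _).trans ?_
    rw [abs_mul, abs_of_nonneg hw0]
    nlinarith [hcorr v γ hγ, mul_le_mul_of_nonneg_left (hTv v γ) hw0,
      mul_le_mul_of_nonneg_right hD (norm_nonneg v)]

/-- The simultaneous approximation when the coordinate `yf a` nearly norms `T x` with positive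
sign. Here `A` plays the role of `1 - α₀ / 3`. -/
lemma exists_bpb_pair {X Y Λ : Type*} [NormedAddCommGroup X] [NormedSpace ℝ X] [CompleteSpace X]
    [NormedAddCommGroup Y] [NormedSpace ℝ Y] (ρ : ℝ) (hρ0 : 0 ≤ ρ) (hρ1 : ρ < 1)
    (yv : Λ → Y) (yf : Λ → (Y →L[ℝ] ℝ)) (hf1 : ∀ α, ‖yf α‖ = 1) (hfv : ∀ α, yf α (yv α) = 1)
    (hρ : ∀ α γ, α ≠ γ → |yf α (yv γ)| ≤ ρ)
    (hlub : ∀ v : Y, IsLUB (Set.range fun α => |yf α v|) ‖v‖)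
    (α₀ : ℝ) (hα0 : 0 ≤ α₀) (hα1 : α₀ ≤ 1) (hX : α₀ < unifNonSqParam X)
    (ε D A : ℝ) (hA : A = 1 - α₀ / 3) (hε : 0 < ε) (hD2 : D < 2) (hDε : 2 * ε < D)
    (hDsq : D ^ 2 * (1 - ρ) = 2 * ε * A * (1 + ρ))
    (T : X →L[ℝ] Y) (hT : ‖T‖ = 1) (x : X) (hx : ‖x‖ = 1) (a : Λ)
    (hTx : 1 - ε < yf a (T x)) :
    ∃ (z : X) (F : X →L[ℝ] Y), ‖z‖ = 1 ∧ ‖F‖ = 1 ∧ ‖F z‖ = 1 ∧ ‖x - z‖ ≤ D ∧ ‖T - F‖ ≤ D := by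
  have hD : 0 < D := by linarith
  have hρ1' : 0 < 1 - ρ := by linarith
  set g : X →L[ℝ] ℝ := (yf a).comp T with hg
  set q : ℝ := ‖g‖ with hq
  have hgx : 1 - ε < g x := hTx
  have hgq : g x ≤ q := by
    have := g.le_opNorm x
    rw [hx, mul_one] at this
    exact (le_abs_self _).trans this
  have hq1 : q ≤ 1 := by
    have := (yf a).opNorm_comp_le T
    rwa [hf1, hT, one_mul] at this
  have hq0 : 0 < q := by linarith
  set f : X →L[ℝ] ℝ := q⁻¹ • g with hf
  have hfn : ‖f‖ = 1 := by
    rw [hf, norm_smul, norm_inv, Real.norm_of_nonneg hq0.le, inv_mul_cancel₀ hq0.ne']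
  have hgf : g = q • f := by rw [hf, smul_smul, mul_inv_cancel₀ hq0.ne', one_smul]
  have hfx : 1 - (q - 1 + ε) / q ≤ f x := by
    have h1 : 1 - (q - 1 + ε) / q = q⁻¹ * (1 - ε) := by field_simp; ring
    rw [h1, hf, smul_apply, smul_eq_mul]
    exact mul_le_mul_of_nonneg_left hgx.le (by positivity)
  clear_value f
  set ε' : ℝ := (q - 1 + ε) / q with hε'
  have hε'0 : 0 < ε' := div_pos (by linarith) hq0
  have hε'ε : ε' ≤ ε := by
    rw [hε', div_le_iff₀ hq0]; nlinarith
  have hqε' : q * ε' = q - 1 + ε := by rw [hε']; field_simp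
  clear_value ε'
  set k : ℝ := ε' / D with hk
  have hk0 : 0 < k := div_pos hε'0 hD
  have hk2 : k ≤ 1 / 2 := by
    rw [hk, div_le_iff₀ hD]; linarith
  obtain ⟨z, ζ, hz, hζ0, hζz, hxz, hfζ⟩ :=
    exists_phelps f hfn x hx ε' k hk0 (by linarith) hfx
  have hDk : ε' / k = D := by rw [hk]; field_simp
  rw [hDk] at hxz
  have hζpos : 0 < ‖ζ‖ := norm_pos_iff.2 hζ0
  have hfe := norm_sub_normalize_le α₀ hα0 hα1
    (fun g h hg hh => dual_nonsquare α₀ hX g h hg hh) f ζ hfn hζ0 k hk0 hk2 hfζ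
  rw [← hA] at hfe
  set e : X →L[ℝ] ℝ := ‖ζ‖⁻¹ • ζ with he
  have hen : ‖e‖ = 1 := by rw [he, norm_smul, norm_inv, norm_norm, inv_mul_cancel₀ hζpos.ne']
  have hez : e z = 1 := by
    rw [he, smul_apply, hζz, smul_eq_mul, inv_mul_cancel₀ hζpos.ne']
  clear_value e
  -- a convex combination of the two extreme values `ε` and `2 * A * ε / D`
  have hG : ‖e - g‖ ≤ (1 - q) + 2 * A * (q - 1 + ε) / D := by
    rw [hgf, show e - q • f = (1 - q) • e + q • (e - f) by module]
    refine (norm_add_le _ _).trans ?_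
    rw [norm_smul, norm_smul, hen, Real.norm_of_nonneg hq0.le,
      Real.norm_of_nonneg (by linarith : 0 ≤ 1 - q), norm_sub_rev e f, mul_one]
    have h1 := mul_le_mul_of_nonneg_left hfe hq0.le
    have h2 : q * (2 * A * k) = 2 * A * (q - 1 + ε) / D := by
      rw [← hqε', hk]; ring
    linarith
  have hfin : ∀ G, ‖e - g‖ ≤ G → G ≤ D → 2 * (ρ * G / (1 - ρ)) ≤ D * (1 + ρ * G / (1 - ρ)) →
      ∃ (z : X) (F : X →L[ℝ] Y),
        ‖z‖ = 1 ∧ ‖F‖ = 1 ∧ ‖F z‖ = 1 ∧ ‖x - z‖ ≤ D ∧ ‖T - F‖ ≤ D := by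
    intro G h1 h2 h3
    obtain ⟨F, hF1, hF2, hF3⟩ := exists_attaining_operator ρ hρ0 hρ1 yv yf hfv hρ hlub
      T hT a e hen z hz hez G D h1 h2 h3
    exact ⟨z, F, hz, hF1, hF2, hxz, hF3⟩
  have hA0 : 2 / 3 ≤ A := by linarith
  rcases le_total (2 * A) D with h | h
  · have hGε : ‖e - g‖ ≤ ε := by
      refine hG.trans ?_
      have h1 : 2 * A * (q - 1 + ε) / D ≤ q - 1 + ε := by
        rw [div_le_iff₀ hD, mul_comm]
        exact mul_le_mul_of_nonneg_left h (by linarith)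
      linarith
    refine hfin ε hGε (by linarith) ?_
    set w := ρ * ε / (1 - ρ) with hw
    have hw0 : 0 ≤ w := by positivity
    have hwD : w ≤ D ^ 2 := by
      rw [hw, div_le_iff₀ hρ1', hDsq]
      have h1 : ε * (1 + ρ) * (4 / 3) ≤ ε * (1 + ρ) * (2 * A) :=
        mul_le_mul_of_nonneg_left (by linarith) (by positivity)
      have h2 : 0 ≤ ρ * ε := by positivity
      linarith
    have hsq : (2 * w) ^ 2 ≤ (D * (1 + w)) ^ 2 := by
      have h1 : w * (4 * w) ≤ D ^ 2 * (1 + w) ^ 2 :=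
        mul_le_mul hwD (by nlinarith [sq_nonneg (1 - w)]) (by positivity) (by positivity)
      calc (2 * w) ^ 2 = w * (4 * w) := by ring
        _ ≤ _ := h1
        _ = _ := by ring
    exact (sq_le_sq₀ (by positivity) (by positivity)).1 hsq
  · have hGD : ‖e - g‖ ≤ 2 * A * ε / D := by
      refine hG.trans ?_
      rw [le_div_iff₀ hD, add_mul, div_mul_cancel₀ _ hD.ne']
      have h1 : (1 - q) * D ≤ (1 - q) * (2 * A) :=
        mul_le_mul_of_nonneg_left h (by linarith)
      linarith
    have hval : 2 * A * ε / D * (1 + ρ) = D * (1 - ρ) := by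
      field_simp
      linarith
    set G := 2 * A * ε / D with hGdef
    have hG0 : 0 ≤ G := (norm_nonneg _).trans hGD
    clear_value G
    have h1 : 2 * (ρ * G / (1 - ρ)) ≤ D := by
      rw [← mul_div_assoc, div_le_iff₀ hρ1', ← hval]
      have h3 : ρ * G ≤ 1 * G := mul_le_mul_of_nonneg_right hρ1.le hG0
      linarith
    have h2 : 0 ≤ ρ * G / (1 - ρ) := by positivity
    have h3 : 0 ≤ D * (ρ * G / (1 - ρ)) := by positivity
    have h4 : G * (1 - ρ) ≤ D * (1 - ρ) := by
      have h5 : 0 ≤ ρ * G := by positivity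
      linarith
    exact hfin G hGD (le_of_mul_le_mul_right h4 hρ1') (by linarith)

theorem phiS_le_of_propertyBeta_nonsquare
    (X : Type*) [NormedAddCommGroup X] [NormedSpace ℝ X] [CompleteSpace X]
    (Y : Type*) [NormedAddCommGroup Y] [NormedSpace ℝ Y] [CompleteSpace Y] [Nontrivial Y]
    (ρ : ℝ) (hρ : ρ ∈ Set.Ico (0 : ℝ) 1) (hβ : PropertyBeta Y ρ)
    (α₀ : ℝ) (hα₀ : α₀ ∈ Set.Ioc (0 : ℝ) 1) (hX : α₀ < unifNonSqParam X)
    (ε : ℝ) (hε1 : 0 < ε)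
    (hε2 : ε < min ((2 / (1 - α₀ / 3)) * ((1 - ρ) / (1 + ρ)))
      ((1 / 2) * ((1 + ρ) / (1 - ρ)) * (1 - α₀ / 3))) :
    PhiS X Y ε ≤ Real.sqrt (2 * ε * (1 - α₀ / 3)) * Real.sqrt ((1 + ρ) / (1 - ρ)) := by
  obtain ⟨hρ0, hρ1⟩ := hρ
  obtain ⟨hα0, hα1⟩ := hα₀
  obtain ⟨Λ, yv, yf, -, hf1, hfv, hρ, hlub⟩ := hβ
  obtain ⟨hε3, hε4⟩ := lt_min_iff.1 hε2
  have hρ1' : 0 < 1 - ρ := by linarith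
  obtain ⟨A, hA⟩ : ∃ A, A = 1 - α₀ / 3 := ⟨_, rfl⟩
  have hA0 : 0 < A := by linarith
  rw [← hA] at hε3 hε4 ⊢
  set D := Real.sqrt (2 * ε * A) * Real.sqrt ((1 + ρ) / (1 - ρ)) with hD
  have hD0 : 0 ≤ D := by positivity
  have hDsq' : D ^ 2 = 2 * ε * A * ((1 + ρ) / (1 - ρ)) := by
    rw [hD, mul_pow, Real.sq_sqrt (by positivity), Real.sq_sqrt (by positivity)]
  have hDsq : D ^ 2 * (1 - ρ) = 2 * ε * A * (1 + ρ) := by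
    rw [hDsq']; field_simp
  clear_value D
  -- the two bounds defining `ε₀` say exactly that `2 * ε < D < 2`
  have hD2 : D < 2 := by
    have h1 : ε * (A * (1 + ρ)) < 2 * (1 - ρ) := by
      rw [div_mul_div_comm, lt_div_iff₀ (by positivity)] at hε3
      exact hε3
    have h2 : D ^ 2 < 2 ^ 2 := by
      refine lt_of_mul_lt_mul_right ?_ hρ1'.le
      rw [hDsq]; linarith
    exact lt_of_pow_lt_pow_left₀ 2 (by norm_num) h2
  have hDε : 2 * ε < D := by
    have h1 : ε * (2 * ε) < D ^ 2 / 2 := by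
      rw [hDsq']
      nlinarith
    have h2 : (2 * ε) ^ 2 < D ^ 2 := by linarith
    exact lt_of_pow_lt_pow_left₀ 2 hD0 h2
  refine le_of_forall_pos_le_add fun η hη => ?_
  unfold PhiS
  refine csInf_le ⟨0, ?_⟩ ⟨by linarith, fun x T hx hT hTx => ?_⟩
  · rintro δ ⟨hδ, -⟩
    exact hδ.le
  obtain ⟨_, ⟨a, rfl⟩, ha, -⟩ := (hlub (T x)).exists_between hTx
  simp only at ha
  rcases lt_abs.1 ha with h | h
  · obtain ⟨z, F, hz, hF, hFz, hxz, hTF⟩ := exists_bpb_pair ρ hρ0 hρ1 yv yf hf1 hfv hρ hlub α₀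
      hα0.le hα1 hX ε D A hA hε1 hD2 hDε hDsq T hT x hx a h
    exact ⟨z, F, hz, hF, hFz, by linarith, by linarith⟩
  · obtain ⟨z, F, hz, hF, hFz, hxz, hTF⟩ := exists_bpb_pair ρ hρ0 hρ1 yv yf hf1 hfv hρ hlub α₀
      hα0.le hα1 hX ε D A hA hε1 hD2 hDε hDsq T hT (-x) (by rwa [norm_neg]) a (by simpa using h)
    refine ⟨-z, F, by rwa [norm_neg], hF, by rwa [map_neg, norm_neg], ?_, by linarith⟩
    have : ‖x - -z‖ = ‖-x - z‖ := by rw [← norm_neg]; congr 1; abel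
    linarith
end
end

section
/- Let Y be a real Banach space and T : ℓ₁⁽²⁾ → Y a nonzero bounded linear operator. Then ‖T‖ = max{‖T e₁‖, ‖T e₂‖}. Moreover, if T attains its norm at a point x ∈ ℓ₁⁽²⁾ with ‖x‖ = 1 (i.e. ‖T x‖ = ‖T‖) and x does not coincide with any of ±e₁, ±e₂, then either every point of the line segment [T e₁, T e₂] has norm ‖T‖, or every point of the line segment [T e₁, −T e₂] has norm ‖T‖. -/
/-!
Every `x : L12` is `x 0 • e1 + x 1 • e2` with `‖x‖ = |x 0| + |x 1|`, so the triangle inequality gives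
`‖T x‖ ≤ max ‖T e1‖ ‖T e2‖ * ‖x‖`, and the bound is reached at `e1` or `e2`.

If the norm is attained at a unit vector `x` other than `±e1`, `±e2`, then both coordinates are
nonzero, so up to a global sign `T x` is a proper convex combination of `T e1` and `T e2` (equal signs)
or of `T e1` and `-T e2` (opposite signs). Both endpoints have norm at most `‖T‖`, and a convex
function on a segment that attains its maximum at an interior point is constant; this last step is
`norm_eq_of_mem_segment`.
-/

noncomputable section

/-- The two-dimensional real `ℓ₁` space. -/
abbrev L12 : Type := PiLp 1 (fun _ : Fin 2 => ℝ)

/-- The first standard basis vector of `ℓ₁⁽²⁾`. -/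
def e1 : L12 := (WithLp.equiv 1 (Fin 2 → ℝ)).symm ![1, 0]

/-- The second standard basis vector of `ℓ₁⁽²⁾`. -/
def e2 : L12 := (WithLp.equiv 1 (Fin 2 → ℝ)).symm ![0, 1]

/-- The norm is constant on a segment as soon as a bound `M` for both endpoints is reached at a
point `a • u + b • v` of its relative interior. -/
theorem norm_eq_of_mem_segment {Y : Type*} [NormedAddCommGroup Y] [NormedSpace ℝ Y]
    {u v : Y} {M a b : ℝ} (hu : ‖u‖ ≤ M) (hv : ‖v‖ ≤ M) (ha : 0 < a) (hb : 0 < b)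
    (hab : a + b = 1) (h : ‖a • u + b • v‖ = M) :
    ∀ w ∈ segment ℝ u v, ‖w‖ = M := by
  rintro w ⟨c, d, hc, hd, hcd, rfl⟩
  set w := c • u + d • v with hw
  apply le_antisymm
  · calc ‖w‖ ≤ ‖c • u‖ + ‖d • v‖ := norm_add_le _ _
      _ = c * ‖u‖ + d * ‖v‖ := by rw [norm_smul_of_nonneg hc, norm_smul_of_nonneg hd]
      _ ≤ c * M + d * M := by gcongr
      _ = M := by rw [← add_mul, hcd, one_mul]
  · obtain rfl : a = 1 - b := by linarith
    obtain rfl : c = 1 - d := by linarith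
    rcases le_total d b with hdb | hdb
    -- the maximum point lies between `w` and `v`
    · have key : (1 - d) • ((1 - b) • u + b • v) = (1 - b) • w + (b - d) • v := by
        rw [hw]; module
      have h1 : (1 - d) * M ≤ (1 - b) * ‖w‖ + (b - d) * ‖v‖ := by
        rw [← h, ← norm_smul_of_nonneg hc, key, ← norm_smul_of_nonneg ha.le,
          ← norm_smul_of_nonneg (sub_nonneg.2 hdb)]
        exact norm_add_le _ _
      have h2 := mul_le_mul_of_nonneg_left hv (sub_nonneg.2 hdb)
      exact le_of_mul_le_mul_left (by linarith) ha
    -- the maximum point lies between `u` and `w`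
    · have key : d • ((1 - b) • u + b • v) = b • w + (d - b) • u := by
        rw [hw]; module
      have h1 : d * M ≤ b * ‖w‖ + (d - b) * ‖u‖ := by
        rw [← h, ← norm_smul_of_nonneg hd, key, ← norm_smul_of_nonneg hb.le,
          ← norm_smul_of_nonneg (sub_nonneg.2 hdb)]
        exact norm_add_le _ _
      have h2 := mul_le_mul_of_nonneg_left hu (sub_nonneg.2 hdb)
      exact le_of_mul_le_mul_left (by linarith) hb

theorem L12_norm (x : L12) : ‖x‖ = |x 0| + |x 1| := by
  simp [PiLp.norm_eq_of_L1, Fin.sum_univ_two]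

theorem L12_eq (x : L12) : x = x 0 • e1 + x 1 • e2 := by
  ext i
  fin_cases i <;> simp [e1, e2]

theorem norm_e1 : ‖e1‖ = 1 := by simp [L12_norm, e1]

theorem norm_e2 : ‖e2‖ = 1 := by simp [L12_norm, e2]

theorem norm_operator_on_l1_and_norm_attainment
    (Y : Type*) [NormedAddCommGroup Y] [NormedSpace ℝ Y] [CompleteSpace Y]
    (T : L12 →L[ℝ] Y) (hT : T ≠ 0) :
    ‖T‖ = max ‖T e1‖ ‖T e2‖ ∧
      ∀ x : L12, ‖x‖ = 1 → ‖T x‖ = ‖T‖ →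
        x ≠ e1 → x ≠ -e1 → x ≠ e2 → x ≠ -e2 →
        (∀ w ∈ segment ℝ (T e1) (T e2), ‖w‖ = ‖T‖) ∨
        (∀ w ∈ segment ℝ (T e1) (-(T e2)), ‖w‖ = ‖T‖) := by
  have h1 : ‖T e1‖ ≤ ‖T‖ := T.unit_le_opNorm _ norm_e1.le
  have h2 : ‖T e2‖ ≤ ‖T‖ := T.unit_le_opNorm _ norm_e2.le
  have hTx (x : L12) : T x = x 0 • T e1 + x 1 • T e2 := by
    conv_lhs => rw [L12_eq x]
    simp only [map_add, map_smul]
  refine ⟨le_antisymm ?_ (max_le h1 h2), ?_⟩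
  · refine T.opNorm_le_bound (le_max_of_le_left (norm_nonneg _)) fun x => ?_
    calc ‖T x‖ ≤ ‖x 0 • T e1‖ + ‖x 1 • T e2‖ := by rw [hTx x]; exact norm_add_le _ _
      _ = |x 0| * ‖T e1‖ + |x 1| * ‖T e2‖ := by simp only [norm_smul, Real.norm_eq_abs]
      _ ≤ |x 0| * max ‖T e1‖ ‖T e2‖ + |x 1| * max ‖T e1‖ ‖T e2‖ := by
        gcongr
        · exact le_max_left _ _
        · exact le_max_right _ _
      _ = max ‖T e1‖ ‖T e2‖ * ‖x‖ := by rw [L12_norm]; ring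
  · intro x hx hTx' n1 n1' n2 n2'
    have hxe := L12_eq x
    rw [L12_norm] at hx
    rw [hTx x] at hTx'
    generalize x 0 = a at *
    generalize x 1 = b at *
    have ha : a ≠ 0 := by
      rintro rfl
      rcases eq_or_eq_neg_of_abs_eq (show |b| = 1 by simpa using hx) with rfl | rfl
      · exact n2 (by simpa using hxe)
      · exact n2' (by simpa using hxe)
    have hb : b ≠ 0 := by
      rintro rfl
      rcases eq_or_eq_neg_of_abs_eq (show |a| = 1 by simpa using hx) with rfl | rfl
      · exact n1 (by simpa using hxe)
      · exact n1' (by simpa using hxe)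
    have h2' : ‖-(T e2)‖ ≤ ‖T‖ := by rwa [norm_neg]
    rcases lt_or_gt_of_ne ha with ha | ha <;> rcases lt_or_gt_of_ne hb with hb | hb <;>
      simp only [abs_of_neg, abs_of_pos, ha, hb] at hx
    · refine .inl (norm_eq_of_mem_segment h1 h2 (neg_pos.2 ha) (neg_pos.2 hb) hx ?_)
      rw [← hTx', ← norm_neg]
      congr 1; module
    · refine .inr (norm_eq_of_mem_segment h1 h2' (neg_pos.2 ha) hb hx ?_)
      rw [← hTx', ← norm_neg]
      congr 1; module
    · refine .inr (norm_eq_of_mem_segment h1 h2' ha (neg_pos.2 hb) hx ?_)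
      rw [← hTx']
      congr 1; module
    · exact .inl (norm_eq_of_mem_segment h1 h2 ha hb hx hTx')
end
end
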